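/- arXiv:2103.13521 — 2 statements merged into one kernel-verified Lean document; each statement's English description precedes it below -/
import Mathlib

section
/- The joint distribution P of a structural causal model associated with a directed ancestral graph G_0 is Markovian to G_0: for all pairwise disjoint A,B,C⊆{1,…,N}, if A⊥B|C (m-separation) holds in G_0, then X_A is conditionally independent of X_B given X_C under P. -/
open MeasureTheory ProbabilityTheory

/-! ## Mixed graphs, m-separation, and related graphical notions -/

/-- A mixed graph with arrows (`i → j`) and bidirected arcs (`i ↔ j`). -/
structure MixedGraph (V : Type) where
  arrow : V → V → Prop
  arc : V → V → Prop

namespace MixedGraph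

variable {V : Type} (G : MixedGraph V)

/-- `G.anc i j` : `i` is an ancestor of `j`, i.e. there is a directed path from `i` to `j`. -/
def anc (i j : V) : Prop := Relation.TransGen G.arrow i j

/-- Adjacency: there is some edge between `i` and `j`. -/
def adj (i j : V) : Prop := G.arrow i j ∨ G.arrow j i ∨ G.arc i j

/-- A directed ancestral graph: a simple mixed graph with arrows and arcs, no directed
cycle, and no arc one of whose endpoints is an ancestor of the other. -/
def IsDirectedAncestral : Prop :=
  (∀ i j, G.arc i j ↔ G.arc j i) ∧
  (∀ i, ¬ G.arc i i) ∧
  (∀ i j, ¬ (G.arrow i j ∧ G.arrow j i)) ∧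
  (∀ i j, ¬ (G.arrow i j ∧ G.arc i j)) ∧
  (∀ i, ¬ G.anc i i) ∧
  (∀ i j, G.arc i j → ¬ G.anc i j ∧ ¬ G.anc j i)

/-- A DAG: only arrows, and no directed cycle. -/
def IsDAG : Prop := (∀ i j, ¬ G.arc i j) ∧ (∀ i, ¬ G.anc i i)

/-- There is an edge between `i` and `j` with an arrowhead at `j`. -/
def headInto (i j : V) : Prop := G.arrow i j ∨ G.arc i j

/-- The inner node `b` of a tripath `⟨a,b,c⟩` is a collider. -/
def collider (a b c : V) : Prop := G.headInto a b ∧ G.headInto c b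

/-- The list of nodes `p` is a path which is connecting given `C` : consecutive nodes are
adjacent, no node is repeated, every collider inner node is in `C` or an ancestor of a node
in `C`, and every non-collider inner node is not in `C`. -/
def Connecting (C : Set V) (p : List V) : Prop :=
  p.Nodup ∧ p.Chain' G.adj ∧
  ∀ t, 0 < t → ∀ (h1 : t - 1 < p.length) (h2 : t < p.length) (h3 : t + 1 < p.length),
    (G.collider (p.get ⟨t-1, h1⟩) (p.get ⟨t, h2⟩) (p.get ⟨t+1, h3⟩) →
      p.get ⟨t, h2⟩ ∈ C ∨ ∃ c ∈ C, G.anc (p.get ⟨t, h2⟩) c) ∧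
    (¬ G.collider (p.get ⟨t-1, h1⟩) (p.get ⟨t, h2⟩) (p.get ⟨t+1, h3⟩) →
      p.get ⟨t, h2⟩ ∉ C)

/-- m-separation : `A ⊥ B | C` in `G` iff there is no connecting path between `A` and `B`
given `C`. -/
def mSep (A B C : Set V) : Prop :=
  ¬ ∃ p : List V, G.Connecting C p ∧
      (∃ a ∈ A, p.head? = some a) ∧ (∃ b ∈ B, p.getLast? = some b)

/-- Two graphs are Markov equivalent if they induce the same independence model by
m-separation. -/
def MarkovEquiv (H : MixedGraph V) : Prop :=
  ∀ A B C : Set V, Disjoint A B → Disjoint A C → Disjoint B C →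
    (G.mSep A B C ↔ H.mSep A B C)

/-- `G` is maximal: every pair of non-adjacent nodes is separated given some set. -/
def Maximal : Prop :=
  ∀ i j : V, i ≠ j → ¬ G.adj i j → ∃ C : Set V, i ∉ C ∧ j ∉ C ∧ G.mSep {i} {j} C

/-- `an(i,j) = (an(i) ∪ an(j)) \ {i,j}`. -/
def anSet (i j : V) : Set V :=
  {k | (G.anc k i ∨ G.anc k j) ∧ k ≠ i ∧ k ≠ j}

/-- The strict form of the minimal order of `G` : `a < b` iff `b` is an ancestor of `a`. -/
def minLt (a b : V) : Prop := G.anc b a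

end MixedGraph

/-! ## Abstract (singleton) independence relations and stability conditions -/

section IndependenceRelations

variable {V : Type}

/-- Ordered upward-stability of a singleton independence relation `ci` w.r.t. the strict
partial order `lt`. -/
def UpStab (lt : V → V → Prop) (ci : V → V → Set V → Prop) : Prop :=
  ∀ i j (C : Set V), i ≠ j → i ∉ C → j ∉ C → ci i j C →
    ∀ k, k ≠ i → k ≠ j → (lt i k ∨ lt j k) → ci i j (C ∪ {k})

/-- Ordered downward-stability of a singleton independence relation `ci` w.r.t. the strict
partial order `lt`. -/
def DownStab (lt : V → V → Prop) (ci : V → V → Set V → Prop) : Prop :=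
  ∀ i j (C : Set V), i ≠ j → i ∉ C → j ∉ C → ci i j C →
    ∀ k, ¬ lt i k → ¬ lt j k → (∀ l ∈ C \ {k}, ¬ lt l k) → ci i j (C \ {k})

/-- The skeleton of an independence relation: `i` and `j` are adjacent iff there is no `C`
with `⟨i,j|C⟩` an independence. -/
def skP (ci : V → V → Set V → Prop) (i j : V) : Prop :=
  i ≠ j ∧ ¬ ∃ C : Set V, i ∉ C ∧ j ∉ C ∧ ci i j C

/-- An output of a natural constraint-based structure-learning algorithm: a graph `H` whose
skeleton is the skeleton of the independence relation `ci`, obtained by directing the edges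
of that skeleton according to a `P`-compatible partial order (given here by its strict form
`lt`, required to coincide with the minimal order of `H`), w.r.t. which ordered upward- and
downward-stability hold. -/
def NaturalOutput (ci : V → V → Set V → Prop) (H : MixedGraph V) : Prop :=
  (∀ i j, H.adj i j ↔ skP ci i j) ∧
  ∃ lt : V → V → Prop, Irreflexive lt ∧ Transitive lt ∧
    (∀ i j, H.arrow i j ↔ (skP ci i j ∧ lt j i)) ∧
    (∀ i j, H.arc i j ↔ (skP ci i j ∧ ¬ lt i j ∧ ¬ lt j i)) ∧
    (∀ a b, lt a b ↔ H.minLt a b) ∧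
    UpStab lt ci ∧ DownStab lt ci

/-- Singleton-transitivity. -/
def SingletonTransitive (ci : V → V → Set V → Prop) : Prop :=
  ∀ i j k (C : Set V), i ≠ j → i ≠ k → j ≠ k → i ∉ C → j ∉ C → k ∉ C →
    ci i j C → ci i j (C ∪ {k}) → ci i k C ∨ ci j k C

/-- `ci` is V-unstable : there is a V-configuration `⟨i,k,j⟩` in the skeleton of `ci` and a
set `C` disjoint from `{i,j,k}` with `⟨i,j|C⟩` and `⟨i,j|C∪{k}⟩` independencies. -/
def VUnstable (ci : V → V → Set V → Prop) : Prop :=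
  ∃ i k j : V, ∃ C : Set V, i ≠ j ∧ i ≠ k ∧ j ≠ k ∧
    skP ci i k ∧ skP ci k j ∧ ¬ skP ci i j ∧
    i ∉ C ∧ j ∉ C ∧ k ∉ C ∧ ci i j C ∧ ci i j (C ∪ {k})

def VStable (ci : V → V → Set V → Prop) : Prop := ¬ VUnstable ci

/-- `ci` is path-unstable : there is a path `⟨i, i₁, …, i_r, k, j⟩` in the skeleton of `ci`
with `i,j` non-adjacent and every `i_n` adjacent to `j`, and a set `C` disjoint from
`{i,j,k}`, such that `⟨i,j | U∪C⟩` and `⟨i,j | U∪C∪{k}⟩` are independencies, where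
`U = {i₁,…,i_r}`. -/
def PathUnstable (ci : V → V → Set V → Prop) : Prop :=
  ∃ (i k j : V) (is : List V) (C : Set V),
    (i :: (is ++ [k, j])).Nodup ∧
    (i :: (is ++ [k, j])).Chain' (skP ci) ∧
    ¬ skP ci i j ∧
    (∀ m ∈ is, skP ci m j) ∧
    i ∉ C ∧ j ∉ C ∧ k ∉ C ∧
    ci i j ({m | m ∈ is} ∪ C) ∧ ci i j (({m | m ∈ is} ∪ C) ∪ {k})

def PathStable (ci : V → V → Set V → Prop) : Prop := ¬ PathUnstable ci

/-- The uniqueness property: all maximal directed ancestral graphs with the skeleton of `ci`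
w.r.t. (the minimal order of) which `ci` satisfies ordered upward- and downward-stability
are Markov equivalent. -/
def UniquenessProp (ci : V → V → Set V → Prop) : Prop :=
  ∀ H1 H2 : MixedGraph V,
    H1.IsDirectedAncestral → H1.Maximal → (∀ i j, H1.adj i j ↔ skP ci i j) →
      UpStab H1.minLt ci → DownStab H1.minLt ci →
    H2.IsDirectedAncestral → H2.Maximal → (∀ i j, H2.adj i j ↔ skP ci i j) →
      UpStab H2.minLt ci → DownStab H2.minLt ci →
    H1.MarkovEquiv H2

/-- The DAG-uniqueness property: all DAGs with the skeleton of `ci` w.r.t. which `ci`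
satisfies ordered upward- and downward-stability are Markov equivalent. -/
def DAGUniquenessProp (ci : V → V → Set V → Prop) : Prop :=
  ∀ H1 H2 : MixedGraph V,
    H1.IsDAG → (∀ i j, H1.adj i j ↔ skP ci i j) →
      UpStab H1.minLt ci → DownStab H1.minLt ci →
    H2.IsDAG → (∀ i j, H2.adj i j ↔ skP ci i j) →
      UpStab H2.minLt ci → DownStab H2.minLt ci →
    H1.MarkovEquiv H2

end IndependenceRelations

/-! ## Probabilistic conditional independence of collections of variables -/

section Probabilistic

variable {V : Type} {Ω : Type} [MeasurableSpace Ω]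
  {𝓧 : V → Type}

/-- The tuple of variables `X_A`. -/
def restrictVars (X : ∀ v, Ω → 𝓧 v) (A : Set V) : Ω → ∀ a : A, 𝓧 a :=
  fun ω a => X a ω

variable [StandardBorelSpace Ω] [Nonempty Ω] [∀ v, MeasurableSpace (𝓧 v)]

theorem measurable_restrictVars {X : ∀ v, Ω → 𝓧 v} (hX : ∀ v, Measurable (X v))
    (A : Set V) : Measurable (restrictVars X A) :=
  measurable_pi_lambda _ fun a => hX a

/-- `⟨A,B|C⟩ ∈ J(P)` : the tuple `X_A` is conditionally independent of `X_B` given `X_C`. -/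
def CI (μ : Measure Ω) [IsFiniteMeasure μ] (X : ∀ v, Ω → 𝓧 v)
    (hX : ∀ v, Measurable (X v)) (A B C : Set V) : Prop :=
  CondIndepFun (MeasurableSpace.comap (restrictVars X C) MeasurableSpace.pi)
    (Measurable.comap_le (measurable_restrictVars hX C))
    (restrictVars X A) (restrictVars X B) μ

/-- Singleton conditional independence `i ⫫ j | C`. -/
def ciP (μ : Measure Ω) [IsFiniteMeasure μ] (X : ∀ v, Ω → 𝓧 v)
    (hX : ∀ v, Measurable (X v)) (i j : V) (C : Set V) : Prop :=
  CI μ X hX {i} {j} C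

/-- `P` is Markovian to `G` : `J(G) ⊆ J(P)`. -/
def Markovian (μ : Measure Ω) [IsFiniteMeasure μ] (X : ∀ v, Ω → 𝓧 v)
    (hX : ∀ v, Measurable (X v)) (G : MixedGraph V) : Prop :=
  ∀ A B C : Set V, Disjoint A B → Disjoint A C → Disjoint B C →
    G.mSep A B C → CI μ X hX A B C

/-- `P` and `G` are faithful : `J(G) = J(P)`. -/
def Faithful (μ : Measure Ω) [IsFiniteMeasure μ] (X : ∀ v, Ω → 𝓧 v)
    (hX : ∀ v, Measurable (X v)) (G : MixedGraph V) : Prop :=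
  ∀ A B C : Set V, Disjoint A B → Disjoint A C → Disjoint B C →
    (G.mSep A B C ↔ CI μ X hX A B C)

/-- `P` is converse pairwise Markovian to `G`. -/
def ConvPairwiseMarkov (μ : Measure Ω) [IsFiniteMeasure μ] (X : ∀ v, Ω → 𝓧 v)
    (hX : ∀ v, Measurable (X v)) (G : MixedGraph V) : Prop :=
  ∀ i j : V, i ≠ j → ciP μ X hX i j (G.anSet i j) → ¬ G.adj i j

end Probabilistic

/-! ## Structural causal models -/

section SCM

variable {V : Type} [DecidableEq V]

/-- Extend an assignment to the parents of `i` other than `p` by a value at `p`, giving an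
assignment to all parents of `i`. -/
def combineAt (G : MixedGraph V) {𝓧 : V → Type} (i p : V)
    (x : ∀ k : {k : V // G.arrow k i ∧ k ≠ p}, 𝓧 k) (xp : 𝓧 p) :
    ∀ k : {k : V // G.arrow k i}, 𝓧 k :=
  fun k => if h : (k : V) = p then cast (congrArg 𝓧 h).symm xp
           else x ⟨k.1, ⟨k.2, h⟩⟩

/-- Restrict an assignment on `an(i,j)` to the parents of `i` other than `j` (which are
contained in `an(i,j)` since the graph is ancestral and `j → i`). -/
def paProj (G : MixedGraph V) (i j : V) {𝓧 : V → Type}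
    (hpa : ∀ k : V, G.arrow k i → k ≠ j → k ∈ G.anSet i j)
    (xA : ∀ a : G.anSet i j, 𝓧 a) :
    ∀ k : {k : V // G.arrow k i ∧ k ≠ j}, 𝓧 k :=
  fun k => xA ⟨k.1, hpa k.1 k.2.1 k.2.2⟩

variable {Ω : Type} [MeasurableSpace Ω]
  {𝓧 : V → Type} [∀ v, MeasurableSpace (𝓧 v)]
  {E : V → Type} [∀ v, MeasurableSpace (E v)]

/-- `(X, ε, φ)` is a structural causal model associated with the graph `G` under `μ` :
all maps are measurable, `X_i = φ_i(X_{pa(i)}, ε_i)`, and for disjoint `A`, `B`, the noise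
vectors `ε_A` and `ε_B` are independent iff there is no arc between `A` and `B`. -/
def IsSCM (G : MixedGraph V) (μ : MeasureTheory.Measure Ω)
    (X : ∀ v, Ω → 𝓧 v) (ε : ∀ v, Ω → E v)
    (φ : ∀ i, (∀ k : {k : V // G.arrow k i}, 𝓧 k) → E i → 𝓧 i) : Prop :=
  (∀ v, Measurable (X v)) ∧ (∀ v, Measurable (ε v)) ∧
  (∀ i, Measurable fun q : (∀ k : {k : V // G.arrow k i}, 𝓧 k) × E i => φ i q.1 q.2) ∧
  (∀ i ω, X i ω = φ i (fun k => X k ω) (ε i ω)) ∧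
  (∀ A B : Set V, Disjoint A B →
    (ProbabilityTheory.IndepFun (restrictVars ε A) (restrictVars ε B) μ ↔
      ¬ ∃ a ∈ A, ∃ b ∈ B, G.arc a b))

/-- Every function of the SCM is injective in its noise argument. -/
def NoiseInjective (G : MixedGraph V)
    (φ : ∀ i, (∀ k : {k : V // G.arrow k i}, 𝓧 k) → E i → 𝓧 i) : Prop :=
  ∀ i x, Function.Injective (φ i x)

/-- Every function of the SCM is noise surjective. -/
def NoiseSurjective (G : MixedGraph V)
    (φ : ∀ i, (∀ k : {k : V // G.arrow k i}, 𝓧 k) → E i → 𝓧 i) : Prop :=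
  ∀ i p : V, G.arrow p i →
    ∀ x : ∀ k : {k : V // G.arrow k i ∧ k ≠ p}, 𝓧 k,
      ∃ xs : 𝓧 i, ∀ e : E i, ∃ xp : 𝓧 p, φ i (combineAt G i p x xp) e = xs

variable [StandardBorelSpace Ω] [Nonempty Ω] [∀ v, StandardBorelSpace (𝓧 v)]
  [∀ v, Nonempty (𝓧 v)] [Countable V]

/-- Positivity of the joint distribution : conditional probabilities of events of positive
probability are almost surely positive. -/
def Positivity (μ : MeasureTheory.Measure Ω) [MeasureTheory.IsFiniteMeasure μ]
    (X : ∀ v, Ω → 𝓧 v) (hX : ∀ v, Measurable (X v)) : Prop :=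
  ∀ A B : Set V, Disjoint A B → ∀ S : Set (∀ b : B, 𝓧 b), MeasurableSet S →
    0 < μ.map (restrictVars X B) S →
    ∀ᵐ xA ∂(μ.map (restrictVars X A)),
      0 < ProbabilityTheory.condDistrib (restrictVars X B) (restrictVars X A) μ xA S

/-- The SCM has non-constant fibers. -/
def NonConstantFibers (G : MixedGraph V) (μ : MeasureTheory.Measure Ω)
    (X : ∀ v, Ω → 𝓧 v) (ε : ∀ v, Ω → E v)
    (φ : ∀ i, (∀ k : {k : V // G.arrow k i}, 𝓧 k) → E i → 𝓧 i) : Prop :=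
  ∀ i p : V, G.arrow p i →
    ∃ F : Set (∀ k : {k : V // G.arrow k i ∧ k ≠ p}, 𝓧 k),
      MeasurableSet F ∧
      0 < μ.map (fun ω (k : {k : V // G.arrow k i ∧ k ≠ p}) => X k ω) F ∧
      ∀ x ∈ F, ∃ S : Set (𝓧 i), MeasurableSet S ∧
        ¬ ∃ c : ENNReal, ∀ᵐ xp ∂(μ.map (X p)),
          μ {ω | φ i (combineAt G i p x xp) (ε i ω) ∈ S} = c

end SCM

/-!
In a structural causal model the variables are generated, along the arrows, from noise variables
that are dependent only along arcs. Assume that `A` and `B` are m-separated by `C`, and let `W`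
consist of `A ∪ B ∪ C` and its ancestors. Let `S ⊆ W` be the set of the nodes whose noise is
m-connected to `B` given `C`. It contains `B`, avoids `A`, has no arc to `W \ S`, and the parents
of each of `S` and `W \ S` lie in that set or in `C`. Hence the noises of `S` and of `W \ S` are
independent, and `X_v` is a function of `X_C` and of the noise of the part containing `v`. Adding
the nodes of `C` one at a time, ancestors first, to an initially empty conditioning set thus
preserves the conditional independence of the two noises (weak union), and at the end `X_A` and
`X_B` are functions of `X_C` and of one noise each.
-/

/-! ### Conditional independence of σ-algebras -/

section CondIndep

variable {Ω : Type*} {m' m₁ m₂ m₃ n : MeasurableSpace Ω} {mΩ : MeasurableSpace Ω}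

theorem isPiSystem_image2_inter_measurableSet (m₁ m₂ : MeasurableSpace Ω) :
    IsPiSystem (Set.image2 (· ∩ ·) {s | MeasurableSet[m₁] s} {s | MeasurableSet[m₂] s}) := by
  rintro _ ⟨a, ha, b, hb, rfl⟩ _ ⟨a', ha', b', hb', rfl⟩ _
  exact ⟨a ∩ a', @MeasurableSet.inter _ m₁ _ _ ha ha',
    b ∩ b', @MeasurableSet.inter _ m₂ _ _ hb hb', (Set.inter_inter_inter_comm _ _ _ _).symm⟩

theorem generateFrom_image2_inter_measurableSet (m₁ m₂ : MeasurableSpace Ω) :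
    MeasurableSpace.generateFrom
      (Set.image2 (· ∩ ·) {s | MeasurableSet[m₁] s} {s | MeasurableSet[m₂] s}) = m₁ ⊔ m₂ := by
  refine le_antisymm (MeasurableSpace.generateFrom_le ?_) (sup_le ?_ ?_)
  · rintro _ ⟨a, ha, b, hb, rfl⟩
    exact @MeasurableSet.inter _ (m₁ ⊔ m₂) _ _ (le_sup_left (a := m₁) _ ha)
      (le_sup_right (b := m₂) _ hb)
  · exact fun a ha => MeasurableSpace.measurableSet_generateFrom
      ⟨a, ha, Set.univ, @MeasurableSet.univ _ m₂, Set.inter_univ a⟩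
  · exact fun b hb => MeasurableSpace.measurableSet_generateFrom
      ⟨Set.univ, @MeasurableSet.univ _ m₁, b, hb, Set.univ_inter b⟩

variable {μ : Measure Ω} [IsFiniteMeasure μ]

theorem condExp_indicator_ae_eq_mul {f : Ω → ℝ} (hf : StronglyMeasurable[m'] f)
    (hf_int : Integrable f μ) {s : Set Ω} (hs : MeasurableSet s) :
    μ[s.indicator f | m'] =ᵐ[μ] μ⟦s | m'⟧ * f := by
  have h_eq : s.indicator f = s.indicator (fun _ => (1 : ℝ)) * f := by
    ext ω
    by_cases hω : ω ∈ s <;> simp [hω]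
  rw [h_eq]
  exact condExp_mul_of_stronglyMeasurable_right hf (h_eq ▸ hf_int.indicator hs)
    ((integrable_const _).indicator hs)

variable [StandardBorelSpace Ω]

theorem condIndep_sup_left (hm' : m' ≤ mΩ) (hm₁ : m₁ ≤ mΩ) (hm₂ : m₂ ≤ mΩ)
    (h : CondIndep m' m₁ m₂ hm' μ) : CondIndep m' (m' ⊔ m₁) m₂ hm' μ := by
  refine CondIndepSets.condIndep (sup_le hm' hm₁) hm₂
    (isPiSystem_image2_inter_measurableSet m' m₁) (@MeasurableSpace.isPiSystem_measurableSet _ m₂)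
    (generateFrom_image2_inter_measurableSet m' m₁).symm
    (@MeasurableSpace.generateFrom_measurableSet _ m₂).symm ?_
  have h_meas : ∀ s ∈ Set.image2 (· ∩ ·) {a | MeasurableSet[m'] a} {b | MeasurableSet[m₁] b},
      MeasurableSet s := by
    rintro _ ⟨a, ha, b, hb, rfl⟩
    exact (hm' _ ha).inter (hm₁ _ hb)
  refine (condIndepSets_iff _ hm' _ _ h_meas hm₂ μ).2 ?_
  rintro _ t ⟨a, ha, b, hb, rfl⟩ ht
  have pull_out (s : Set Ω) (hs : MeasurableSet s) :
      μ⟦a ∩ s | m'⟧ =ᵐ[μ] a.indicator (μ⟦s | m'⟧) := by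
    rw [← Set.indicator_indicator]
    exact condExp_indicator ((integrable_const _).indicator hs) ha
  have h_mul := (condIndep_iff m' m₁ m₂ hm' hm₁ hm₂ μ).1 h b t hb ht
  rw [Set.inter_assoc]
  filter_upwards [pull_out _ ((hm₁ _ hb).inter (hm₂ _ ht)), pull_out b (hm₁ _ hb), h_mul]
    with ω h_bt h_b h_mul
  rw [h_bt, Pi.mul_apply, h_b]
  by_cases hω : ω ∈ a <;> simp [hω, h_mul]

theorem condIndep_iff_condExp_ae_eq (hm : m' ≤ m₁) (hm₁ : m₁ ≤ mΩ) (hm₂ : m₂ ≤ mΩ) :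
    CondIndep m' m₁ m₂ (hm.trans hm₁) μ ↔
      ∀ t, MeasurableSet[m₂] t → μ⟦t | m₁⟧ =ᵐ[μ] μ⟦t | m'⟧ := by
  have hm' := hm.trans hm₁
  have int_indicator {s : Set Ω} (hs : MeasurableSet s) :
      Integrable (s.indicator fun _ => (1 : ℝ)) μ := (integrable_const _).indicator hs
  have mul_eq {s t : Set Ω} (hs : MeasurableSet[m₁] s) :
      μ[s.indicator (μ⟦t | m'⟧) | m'] =ᵐ[μ] μ⟦s | m'⟧ * μ⟦t | m'⟧ :=
    condExp_indicator_ae_eq_mul stronglyMeasurable_condExp integrable_condExp (hm₁ _ hs)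
  rw [condIndep_iff m' m₁ m₂ hm' hm₁ hm₂]
  constructor
  · intro h t ht
    refine (ae_eq_condExp_of_forall_setIntegral_eq hm₁ (int_indicator (hm₂ _ ht))
      (fun _ _ _ => integrable_condExp.integrableOn) (fun s hs _ => ?_)
      (stronglyMeasurable_condExp.mono hm).aestronglyMeasurable).symm
    have hsΩ := hm₁ _ hs
    calc ∫ ω in s, (μ⟦t | m'⟧) ω ∂μ
        = ∫ ω, (μ[s.indicator (μ⟦t | m'⟧) | m']) ω ∂μ := by
          rw [integral_condExp hm', integral_indicator hsΩ]
      _ = ∫ ω, (μ⟦s ∩ t | m'⟧) ω ∂μ := integral_congr_ae ((mul_eq hs).trans (h s t hs ht).symm)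
      _ = ∫ ω in s, t.indicator (fun _ => (1 : ℝ)) ω ∂μ := by
          rw [integral_condExp hm', ← Set.indicator_indicator, integral_indicator hsΩ]
  · intro h s t hs ht
    calc μ⟦s ∩ t | m'⟧
        =ᵐ[μ] μ[μ⟦s ∩ t | m₁⟧ | m'] := (condExp_condExp_of_le hm hm₁).symm
      _ =ᵐ[μ] μ[s.indicator (μ⟦t | m'⟧) | m'] := by
          rw [← Set.indicator_indicator]
          exact condExp_congr_ae ((condExp_indicator (int_indicator (hm₂ _ ht)) hs).trans
            (h t ht).indicator)
      _ =ᵐ[μ] μ⟦s | m'⟧ * μ⟦t | m'⟧ := mul_eq hs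

theorem condIndep_cond_of_le_of_le (hm' : m' ≤ n) (hn : n ≤ m₁) (hm₁ : m₁ ≤ mΩ)
    (hm₂ : m₂ ≤ mΩ) (h : CondIndep m' m₁ m₂ (hm'.trans (hn.trans hm₁)) μ) :
    CondIndep n m₁ m₂ (hn.trans hm₁) μ := by
  rw [condIndep_iff_condExp_ae_eq (hm'.trans hn) hm₁ hm₂] at h
  rw [condIndep_iff_condExp_ae_eq hn hm₁ hm₂]
  intro t ht
  have h_n : μ⟦t | n⟧ =ᵐ[μ] μ⟦t | m'⟧ := by
    calc μ⟦t | n⟧ =ᵐ[μ] μ[μ⟦t | m₁⟧ | n] := (condExp_condExp_of_le hn hm₁).symm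
      _ =ᵐ[μ] μ[μ⟦t | m'⟧ | n] := condExp_congr_ae (h t ht)
      _ = μ⟦t | m'⟧ := condExp_of_stronglyMeasurable (hn.trans hm₁)
          (stronglyMeasurable_condExp.mono hm') integrable_condExp
  exact (h t ht).trans h_n.symm

theorem condIndep_of_condIndep_of_le_sup_left (hm' : m' ≤ mΩ) (hm₁ : m₁ ≤ mΩ) (hm₂ : m₂ ≤ mΩ)
    (h : CondIndep m' m₁ m₂ hm' μ) (h₃ : m₃ ≤ m' ⊔ m₁) : CondIndep m' m₃ m₂ hm' μ :=
  condIndep_of_condIndep_of_le_left (condIndep_sup_left hm' hm₁ hm₂ h) h₃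

theorem condIndep_cond_sup_of_le_sup_left (hm' : m' ≤ mΩ) (hm₁ : m₁ ≤ mΩ) (hm₂ : m₂ ≤ mΩ)
    (h : CondIndep m' m₁ m₂ hm' μ) (h₃ : m₃ ≤ m' ⊔ m₁) :
    CondIndep (m' ⊔ m₃) m₁ m₂ (sup_le hm' (h₃.trans (sup_le hm' hm₁))) μ :=
  condIndep_of_condIndep_of_le_left
    (condIndep_cond_of_le_of_le le_sup_left (sup_le le_sup_left h₃) (sup_le hm' hm₁) hm₂
      (condIndep_sup_left hm' hm₁ hm₂ h)) le_sup_right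

end CondIndep

/-! ### Recursively generated families of σ-algebras -/

section Families

variable {Ω V : Type*} {r : V → V → Prop} {𝓕 𝓔 : V → MeasurableSpace Ω} {A B C S T : Set V}

theorem le_biSup_sup_biSup_of_wellFounded (hr : WellFounded r)
    (h_le : ∀ v, 𝓕 v ≤ (⨆ u ∈ {u | r u v}, 𝓕 u) ⊔ 𝓔 v)
    (hS : ∀ u v, v ∈ S → r u v → u ∈ S ∪ C) {v : V} (hv : v ∈ S) :
    𝓕 v ≤ (⨆ u ∈ C ∩ {u | Relation.TransGen r u v}, 𝓕 u) ⊔ ⨆ s ∈ S, 𝓔 s := by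
  induction v using hr.induction with
  | _ v ih =>
    refine (h_le v).trans (sup_le (iSup₂_le fun u hu => ?_) ((le_biSup 𝓔 hv).trans le_sup_right))
    rcases hS u v hv hu with hu_S | hu_C
    · refine (ih u hu hu_S).trans (sup_le_sup_right (biSup_mono ?_) _)
      exact fun w hw => ⟨hw.1, hw.2.tail hu⟩
    · exact (le_biSup 𝓕 (⟨hu_C, .single hu⟩ : u ∈ C ∩ {u | Relation.TransGen r u v})).trans
        le_sup_left

variable {m₁ m₂ : MeasurableSpace Ω} {mΩ : MeasurableSpace Ω} [StandardBorelSpace Ω]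
  {μ : Measure Ω} [IsProbabilityMeasure μ]

theorem condIndep_bot_of_indep (hm₁ : m₁ ≤ mΩ) (hm₂ : m₂ ≤ mΩ)
    (h : Indep m₁ m₂ μ) : CondIndep ⊥ m₁ m₂ bot_le μ := by
  rw [condIndep_iff_condExp_ae_eq bot_le hm₁ hm₂]
  intro t ht
  rw [condExp_bot]
  exact condExp_indep_eq hm₂ hm₁ (stronglyMeasurable_const.indicator ht) h.symm

theorem condIndep_biSup_of_indep [IsStrictOrder V r]
    (h𝓕 : ∀ v, 𝓕 v ≤ mΩ) (hm₁ : m₁ ≤ mΩ) (hm₂ : m₂ ≤ mΩ) (h : Indep m₁ m₂ μ)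
    (hC : C.Finite)
    (h_le : ∀ v ∈ C, 𝓕 v ≤ (⨆ u ∈ C ∩ {u | r u v}, 𝓕 u) ⊔ m₁ ∨
      𝓕 v ≤ (⨆ u ∈ C ∩ {u | r u v}, 𝓕 u) ⊔ m₂) :
    CondIndep (⨆ v ∈ C, 𝓕 v) m₁ m₂ (iSup₂_le fun v _ => h𝓕 v) μ := by
  induction hn : C.ncard generalizing C with
  | zero =>
    obtain rfl := (Set.ncard_eq_zero hC).1 hn
    simpa only [Set.mem_empty_iff_false, iSup_false, iSup_bot]
      using condIndep_bot_of_indep hm₁ hm₂ h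
  | succ n ih =>
    let := partialOrderOfSO r
    obtain ⟨v, hv, hv_max⟩ := hC.exists_maximal ((Set.ncard_pos hC).1 (by lia))
    have hv_max (w : V) (hw : w ∈ C) : ¬ r v w := fun hvw => (hv_max hw (Or.inr hvw)).not_gt hvw
    have below_eq (w : V) (hw : w ∈ C) : C ∩ {u | r u w} = (C \ {v}) ∩ {u | r u w} := by
      ext u
      have : r u w → u ≠ v := by
        rintro huw rfl
        exact hv_max w hw huw
      simp only [Set.mem_inter_iff, Set.mem_ofPred_eq, Set.mem_sdiff, Set.mem_singleton_iff]
      tauto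
    have h_prev : CondIndep (⨆ w ∈ C \ {v}, 𝓕 w) m₁ m₂ (iSup₂_le fun w _ => h𝓕 w) μ :=
      ih hC.sdiff (fun w hw => below_eq w hw.1 ▸ h_le w hw.1)
        (by rw [Set.ncard_sdiff_singleton_of_mem hv, hn, Nat.add_sub_cancel])
    have h_sup : ⨆ w ∈ C, 𝓕 w = (⨆ w ∈ C \ {v}, 𝓕 w) ⊔ 𝓕 v := by
      rw [← Set.insert_sdiff_self_of_mem hv, iSup_insert, Set.insert_sdiff_self_of_mem hv, sup_comm]
    have below_le : ⨆ u ∈ C ∩ {u | r u v}, 𝓕 u ≤ ⨆ w ∈ C \ {v}, 𝓕 w := by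
      rw [below_eq v hv]
      exact biSup_mono Set.inter_subset_left
    simp only [h_sup]
    rcases h_le v hv with h_le | h_le
    · exact condIndep_cond_sup_of_le_sup_left _ hm₁ hm₂ h_prev
        (h_le.trans (sup_le_sup_right below_le _))
    · exact (condIndep_cond_sup_of_le_sup_left _ hm₂ hm₁ h_prev.symm
        (h_le.trans (sup_le_sup_right below_le _))).symm

theorem condIndep_biSup_of_subset_union (hr : WellFounded r) (h𝓕 : ∀ v, 𝓕 v ≤ mΩ)
    (h𝓔 : ∀ v, 𝓔 v ≤ mΩ) (h_le : ∀ v, 𝓕 v ≤ (⨆ u ∈ {u | r u v}, 𝓕 u) ⊔ 𝓔 v)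
    (hS : ∀ u v, v ∈ S → r u v → u ∈ S ∪ C) (hT : ∀ u v, v ∈ T → r u v → u ∈ T ∪ C)
    (h_indep : Indep (⨆ v ∈ S, 𝓔 v) (⨆ v ∈ T, 𝓔 v) μ) (hC : C.Finite) (hC_sub : C ⊆ S ∪ T)
    (hA : A ⊆ S) (hB : B ⊆ T) :
    CondIndep (⨆ v ∈ C, 𝓕 v) (⨆ v ∈ A, 𝓕 v) (⨆ v ∈ B, 𝓕 v) (iSup₂_le fun v _ => h𝓕 v) μ := by
  have : IsStrictOrder V (Relation.TransGen r) :=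
    { irrefl := hr.transGen.irrefl.irrefl, trans := fun _ _ _ => .trans }
  have h𝓕_le (U : Set V) : ⨆ v ∈ U, 𝓕 v ≤ mΩ := iSup₂_le fun v _ => h𝓕 v
  have h𝓔_le (U : Set V) : ⨆ v ∈ U, 𝓔 v ≤ mΩ := iSup₂_le fun v _ => h𝓔 v
  have h_noise : CondIndep (⨆ v ∈ C, 𝓕 v) (⨆ v ∈ S, 𝓔 v) (⨆ v ∈ T, 𝓔 v) (h𝓕_le C) μ :=
    condIndep_biSup_of_indep h𝓕 (h𝓔_le S) (h𝓔_le T) h_indep hC fun v hv =>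
      (hC_sub hv).imp (le_biSup_sup_biSup_of_wellFounded hr h_le hS)
        (le_biSup_sup_biSup_of_wellFounded hr h_le hT)
  have le_sup_noise {D U : Set V} (hU : ∀ u v, v ∈ U → r u v → u ∈ U ∪ C) (hD : D ⊆ U) :
      ⨆ v ∈ D, 𝓕 v ≤ (⨆ v ∈ C, 𝓕 v) ⊔ ⨆ v ∈ U, 𝓔 v :=
    iSup₂_le fun v hv => (le_biSup_sup_biSup_of_wellFounded hr h_le hU (hD hv)).trans
      (sup_le_sup_right (biSup_mono fun _ hu => hu.1) _)
  have h_left := condIndep_of_condIndep_of_le_sup_left _ (h𝓔_le S) (h𝓔_le T) h_noise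
    (le_sup_noise hS hA)
  exact (condIndep_of_condIndep_of_le_sup_left _ (h𝓔_le T) (h𝓕_le A) h_left.symm
    (le_sup_noise hT hB)).symm

end Families

/-! ### Open walks and m-separation -/

theorem exists_eq_append_cons_append_cons_of_not_nodup {α : Type*} {l : List α}
    (h : ¬ l.Nodup) : ∃ l₁ a l₂ l₃, l = l₁ ++ a :: (l₂ ++ a :: l₃) := by
  obtain ⟨a, ha⟩ := List.exists_duplicate_iff_not_nodup.2 h
  obtain ⟨l₁, r, rfl, ha₁, hr⟩ := List.cons_sublist_iff.1 (List.duplicate_iff_sublist.1 ha)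
  obtain ⟨s, t, rfl⟩ := List.append_of_mem ha₁
  obtain ⟨s', t', rfl⟩ := List.append_of_mem (List.singleton_sublist.1 hr)
  exact ⟨s, a, t ++ s', t', by simp⟩

namespace MixedGraph

variable {V : Type} {G : MixedGraph V} {A B C : Set V} {a b c u v w x y : V}
  {l l₁ l₂ l₃ p q : List V}

/-- A mixed graph with at most one edge between two nodes, no loops, symmetric arcs and no
directed cycle: a directed ancestral graph without the condition that no endpoint of an arc is
an ancestor of the other. -/
structure IsSimpleAcyclic (G : MixedGraph V) : Prop where
  arc_symm : ∀ i j, G.arc i j → G.arc j i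
  arc_irrefl : ∀ i, ¬ G.arc i i
  not_arc_of_arrow : ∀ i j, G.arrow i j → ¬ G.arc i j
  acyclic : ∀ i, ¬ G.anc i i

theorem IsDirectedAncestral.isSimpleAcyclic (hG : G.IsDirectedAncestral) : G.IsSimpleAcyclic where
  arc_symm i j := (hG.1 i j).1
  arc_irrefl := hG.2.1
  not_arc_of_arrow i j h h' := hG.2.2.2.1 i j ⟨h, h'⟩
  acyclic := hG.2.2.2.2.1

namespace IsSimpleAcyclic

theorem not_headInto_of_arrow (hG : G.IsSimpleAcyclic) (h : G.arrow u v) : ¬ G.headInto v u := by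
  rintro (h' | h')
  · exact hG.acyclic u (.tail (.single h) h')
  · exact hG.not_arc_of_arrow u v h (hG.arc_symm v u h')

theorem not_adj_self (hG : G.IsSimpleAcyclic) (v : V) : ¬ G.adj v v := by
  rintro (h | h | h)
  exacts [hG.acyclic v (.single h), hG.acyclic v (.single h), hG.arc_irrefl v h]

theorem headInto_of_adj_of_not_arrow (hG : G.IsSimpleAcyclic) (h : G.adj u v)
    (huv : ¬ G.arrow u v) : G.headInto v u :=
  (h.resolve_left huv).imp_right (hG.arc_symm u v)

theorem wellFounded_arrow [Finite V] (hG : G.IsSimpleAcyclic) : WellFounded G.arrow := by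
  have : IsStrictOrder V G.anc :=
    { irrefl := hG.acyclic, trans := fun _ _ _ => Relation.TransGen.trans }
  exact Subrelation.wf .single (Finite.wellFounded_of_trans_of_irrefl G.anc)

end IsSimpleAcyclic

/-- The set `an(C) ∪ C` of the nodes of `C` and their ancestors. -/
def ancestralClosure (G : MixedGraph V) (C : Set V) : Set V :=
  {v | ∃ c ∈ C, Relation.ReflTransGen G.arrow v c}

theorem subset_ancestralClosure : C ⊆ G.ancestralClosure C :=
  fun c hc => ⟨c, hc, .refl⟩

theorem mem_ancestralClosure_of_arrow (h : G.arrow u v) (hv : v ∈ G.ancestralClosure C) :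
    u ∈ G.ancestralClosure C :=
  let ⟨c, hc, hvc⟩ := hv
  ⟨c, hc, .head h hvc⟩

theorem mem_or_exists_anc_of_mem_ancestralClosure (hv : v ∈ G.ancestralClosure C) :
    v ∈ C ∨ ∃ c ∈ C, G.anc v c := by
  obtain ⟨c, hc, hvc⟩ := hv
  rcases Relation.reflTransGen_iff_eq_or_transGen.1 hvc with rfl | hvc
  exacts [Or.inl hc, Or.inr ⟨c, hc, hvc⟩]

/-- The node `b`, traversed from `a` to `c`, does not block a walk given `C`. -/
def IsOpenAt (G : MixedGraph V) (C : Set V) (a b c : V) : Prop :=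
  (G.collider a b c → b ∈ G.ancestralClosure C) ∧ (¬ G.collider a b c → b ∉ C)

theorem IsOpenAt.symm (h : G.IsOpenAt C a b c) : G.IsOpenAt C c b a :=
  ⟨fun h' => h.1 h'.symm, fun h' => h.2 fun h'' => h' h''.symm⟩

theorem IsSimpleAcyclic.isOpenAt_of_arrow (hG : G.IsSimpleAcyclic) (h : G.arrow b a)
    (hb : b ∉ C) : G.IsOpenAt C a b c :=
  ⟨fun h' => absurd h'.1 (hG.not_headInto_of_arrow h), fun _ => hb⟩

-- The loop `v, x, …, y, v` is cut out of the walk `a, v, x, …, y, v, c`: its node `v` turns into a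
-- collider without having been one only if the loop starts with `v → x`.
theorem IsOpenAt.cut_loop (hG : G.IsSimpleAcyclic) (h₁ : G.IsOpenAt C a v x)
    (h₂ : G.IsOpenAt C y v c) (hvx : G.adj v x) (hv : G.arrow v x → v ∈ G.ancestralClosure C) :
    G.IsOpenAt C a v c := by
  refine ⟨fun h => ?_, fun h => ?_⟩
  · by_cases harrow : G.arrow v x
    · exact hv harrow
    · exact h₁.1 ⟨h.1, hG.headInto_of_adj_of_not_arrow hvx harrow⟩
  · by_cases hav : G.headInto a v
    · exact h₂.2 fun h' => h ⟨hav, h'.2⟩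
    · exact h₁.2 fun h' => hav h'.1

/-- `p` is a walk, possibly with repeated nodes, none of whose inner nodes blocks it given `C`. -/
structure IsOpenWalk (G : MixedGraph V) (C : Set V) (p : List V) : Prop where
  isChain : p.IsChain G.adj
  isOpenAt : ∀ {a b c}, [a, b, c] <:+: p → G.IsOpenAt C a b c

namespace IsOpenWalk

theorem singleton (v : V) : G.IsOpenWalk C [v] where
  isChain := .singleton v
  isOpenAt h := by simpa using h.length_le

theorem of_isInfix (h : G.IsOpenWalk C p) (hq : q <:+: p) : G.IsOpenWalk C q where
  isChain := h.isChain.infix hq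
  isOpenAt h' := h.isOpenAt (h'.trans hq)

end IsOpenWalk

theorem isOpenWalk_cons_cons : G.IsOpenWalk C (a :: b :: l) ↔
    G.adj a b ∧ (∀ c ∈ l.head?, G.IsOpenAt C a b c) ∧ G.IsOpenWalk C (b :: l) := by
  refine ⟨fun h => ⟨h.isChain.rel, fun c hc => h.isOpenAt ?_,
      h.of_isInfix (List.suffix_cons a _).isInfix⟩,
    fun ⟨hab, hopen, h⟩ => ⟨.cons_cons hab h.isChain, ?_⟩⟩
  · obtain ⟨l', rfl⟩ := List.head?_eq_some_iff.1 hc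
    exact ⟨[], l', rfl⟩
  · intro x y z hxyz
    rcases List.infix_cons_iff.1 hxyz with ⟨l', hl'⟩ | hxyz
    · simp only [List.cons_append, List.nil_append, List.cons.injEq] at hl'
      obtain ⟨rfl, rfl, rfl⟩ := hl'
      exact hopen z rfl
    · exact h.isOpenAt hxyz

theorem IsOpenWalk.append (h₁ : G.IsOpenWalk C (l₁ ++ [v])) (h₂ : G.IsOpenWalk C (v :: l₂))
    (h : ∀ a ∈ l₁.getLast?, ∀ c ∈ l₂.head?, G.IsOpenAt C a v c) :
    G.IsOpenWalk C (l₁ ++ v :: l₂) := by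
  induction l₁ with
  | nil => exact h₂
  | cons a l ih =>
    cases l with
    | nil => exact isOpenWalk_cons_cons.2 ⟨(isOpenWalk_cons_cons.1 h₁).1, h a rfl, h₂⟩
    | cons b l =>
      obtain ⟨hab, hopen, h₁⟩ := isOpenWalk_cons_cons.1 h₁
      refine isOpenWalk_cons_cons.2 ⟨hab, ?_, ih h₁ h⟩
      cases l <;> exact hopen

theorem IsOpenWalk.mem_ancestralClosure_or_anc (hG : G.IsSimpleAcyclic)
    (h : G.IsOpenWalk C (a :: b :: l)) (hab : G.arrow a b) :
    a ∈ G.ancestralClosure C ∨ ∀ z ∈ (b :: l).getLast?, G.anc a z := by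
  induction l generalizing a b with
  | nil =>
    refine Or.inr fun z hz => ?_
    obtain rfl : b = z := by simpa using hz
    exact .single hab
  | cons c l ih =>
    obtain ⟨-, hopen, h⟩ := isOpenWalk_cons_cons.1 h
    by_cases hbc : G.arrow b c
    · exact (ih h hbc).imp (mem_ancestralClosure_of_arrow hab) fun h z hz => .head hab (h z hz)
    · have hcb := hG.headInto_of_adj_of_not_arrow h.isChain.rel hbc
      exact Or.inl (mem_ancestralClosure_of_arrow hab ((hopen c rfl).1 ⟨Or.inl hab, hcb⟩))

theorem IsOpenWalk.cut_loop (hG : G.IsSimpleAcyclic)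
    (h : G.IsOpenWalk C (l₁ ++ v :: (l₂ ++ v :: l₃))) : G.IsOpenWalk C (l₁ ++ v :: l₃) := by
  refine IsOpenWalk.append (h.of_isInfix ⟨[], l₂ ++ v :: l₃, by simp⟩)
    (h.of_isInfix ⟨l₁ ++ v :: l₂, [], by simp⟩) fun a ha c hc => ?_
  obtain ⟨l₁, rfl⟩ := List.getLast?_eq_some_iff.1 ha
  obtain ⟨l₃, rfl⟩ := List.head?_eq_some_iff.1 hc
  have hloop : G.IsOpenWalk C (v :: (l₂ ++ [v])) := h.of_isInfix ⟨l₁ ++ [a], c :: l₃, by simp⟩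
  obtain ⟨x, l₂', hx⟩ : ∃ x l, l₂ = x :: l := by
    refine List.exists_cons_of_ne_nil ?_
    rintro rfl
    exact hG.not_adj_self v hloop.isChain.rel
  obtain ⟨l₂'', y, hy⟩ := List.eq_nil_or_concat l₂ |>.resolve_left (by simp [hx])
  have hvx : G.IsOpenWalk C (v :: x :: (l₂' ++ [v])) := by rwa [hx] at hloop
  have h_in : G.IsOpenAt C a v x := h.isOpenAt ⟨l₁, l₂' ++ v :: c :: l₃, by simp [hx]⟩
  have h_out : G.IsOpenAt C y v c := h.isOpenAt ⟨l₁ ++ a :: v :: l₂'', l₃, by simp [hy]⟩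
  refine h_in.cut_loop hG h_out hvx.isChain.rel fun harrow => ?_
  exact (hvx.mem_ancestralClosure_or_anc hG harrow).resolve_right
    fun hanc => hG.acyclic v (hanc v (by simp [List.getLast?_cons]))

theorem IsOpenWalk.connecting (h : G.IsOpenWalk C p) (hp : p.Nodup) : G.Connecting C p := by
  refine ⟨hp, h.isChain, fun t ht h₁ h₂ h₃ => ?_⟩
  obtain ⟨s, rfl⟩ : ∃ s, t = s + 1 := ⟨t - 1, by lia⟩
  have h_sub : [p[s], p[s + 1], p[s + 2]] <:+: p :=
    ⟨p.take s, p.drop (s + 3), by simp⟩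
  have hopen := h.isOpenAt h_sub
  exact ⟨fun hc => mem_or_exists_anc_of_mem_ancestralClosure (hopen.1 hc), hopen.2⟩

theorem IsOpenWalk.exists_connecting (hG : G.IsSimpleAcyclic) (h : G.IsOpenWalk C p) :
    ∃ q, G.Connecting C q ∧ q.head? = p.head? ∧ q.getLast? = p.getLast? := by
  induction hn : p.length using Nat.strong_induction_on generalizing p with
  | _ n ih =>
    by_cases hp : p.Nodup
    · exact ⟨p, h.connecting hp, rfl, rfl⟩
    obtain ⟨l₁, v, l₂, l₃, rfl⟩ := exists_eq_append_cons_append_cons_of_not_nodup hp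
    obtain ⟨q, hq, hq_head, hq_last⟩ := ih (l₁ ++ v :: l₃).length (by simp at hn ⊢; lia)
      (h.cut_loop hG) rfl
    exact ⟨q, hq, hq_head.trans (by cases l₁ <;> rfl),
      hq_last.trans (by simp [List.getLast?_append, List.getLast?_cons])⟩

/-- `p` is an open walk given `C` ending in `B`. -/
structure IsOpenWalkTo (G : MixedGraph V) (C B : Set V) (p : List V) : Prop
    extends G.IsOpenWalk C p where
  exists_getLast : ∃ b ∈ B, p.getLast? = some b

namespace IsOpenWalkTo

theorem singleton (hv : v ∈ B) : G.IsOpenWalkTo C B [v] where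
  toIsOpenWalk := .singleton v
  exists_getLast := ⟨v, hv, rfl⟩

theorem cons (h : G.IsOpenWalkTo C B (v :: l)) (huv : G.adj u v)
    (hopen : ∀ c ∈ l.head?, G.IsOpenAt C u v c) : G.IsOpenWalkTo C B (u :: v :: l) where
  toIsOpenWalk := isOpenWalk_cons_cons.2 ⟨huv, hopen, h.toIsOpenWalk⟩
  exists_getLast := h.exists_getLast

theorem notMem_of_mSep (hG : G.IsSimpleAcyclic) (hsep : G.mSep A B C)
    (h : G.IsOpenWalkTo C B (v :: l)) : v ∉ A := by
  intro hv
  obtain ⟨q, hq, hq_head, hq_last⟩ := h.toIsOpenWalk.exists_connecting hG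
  obtain ⟨b, hb, hb_last⟩ := h.exists_getLast
  exact hsep ⟨q, hq, ⟨v, hv, hq_head⟩, ⟨b, hb, hq_last.trans hb_last⟩⟩

theorem exists_of_descendant (hG : G.IsSimpleAcyclic) (h : G.IsOpenWalkTo C B (v :: l))
    (hv : v ∉ G.ancestralClosure C) (hvw : Relation.ReflTransGen G.arrow v w) :
    ∃ l', G.IsOpenWalkTo C B (w :: l') := by
  induction hvw using Relation.ReflTransGen.head_induction_on generalizing l with
  | refl => exact ⟨l, h⟩
  | head huv _ ih =>
    exact ih (h.cons (Or.inr (Or.inl huv)) fun _ _ =>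
        hG.isOpenAt_of_arrow huv (Set.notMem_subset subset_ancestralClosure hv))
      fun hu => hv (mem_ancestralClosure_of_arrow huv hu)

theorem exists_directed (hG : G.IsSimpleAcyclic) (hw : w ∈ B) (hv : v ∉ G.ancestralClosure C)
    (hvw : Relation.ReflTransGen G.arrow v w) :
    ∃ l, G.IsOpenWalkTo C B (v :: l) ∧ ∀ c ∈ l.head?, G.arrow v c := by
  induction hvw using Relation.ReflTransGen.head_induction_on with
  | refl => exact ⟨[], singleton hw, by simp⟩
  | @head u v huv _ ih =>
    have hv' : v ∉ G.ancestralClosure C := fun h => hv (mem_ancestralClosure_of_arrow huv h)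
    obtain ⟨l, hl, hl_arrow⟩ := ih hv'
    refine ⟨v :: l, hl.cons (Or.inl huv) fun c hc => ?_, by simpa using huv⟩
    exact (hG.isOpenAt_of_arrow (hl_arrow c hc)
      (Set.notMem_subset subset_ancestralClosure hv')).symm

-- The case `v ∉ an(C) ∪ C` is where m-separation enters: descending from `v` must not lead to
-- `A`, so it leads to `B`, and the walk can be replaced by this directed path.
theorem exists_cons_of_mSep (hG : G.IsSimpleAcyclic) (hsep : G.mSep A B C)
    (h : G.IsOpenWalkTo C B (v :: l)) (hv : v ∈ G.ancestralClosure (A ∪ B ∪ C)) (hvC : v ∉ C)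
    (huv : G.adj u v) : ∃ l', G.IsOpenWalkTo C B (u :: v :: l') := by
  by_cases hv_an : v ∈ G.ancestralClosure C
  · exact ⟨l, h.cons huv fun _ _ => ⟨fun _ => hv_an, fun _ => hvC⟩⟩
  obtain ⟨w, (hw | hw) | hw, hvw⟩ := hv
  · obtain ⟨l', hl'⟩ := h.exists_of_descendant hG hv_an hvw
    exact absurd hw (hl'.notMem_of_mSep hG hsep)
  · obtain ⟨l', hl', hl'_arrow⟩ := exists_directed hG hw hv_an hvw
    exact ⟨l', hl'.cons huv fun c hc => (hG.isOpenAt_of_arrow (hl'_arrow c hc) hvC).symm⟩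
  · exact absurd ⟨w, hw, hvw⟩ hv_an

end IsOpenWalkTo

/-- The nodes of `A ∪ B ∪ C` and their ancestors whose noise is m-connected to `B` given `C`: an
open walk from `v` to `B` can be prolonged beyond `v` by an arrow pointing into `v`. For `v ∈ C`
this means that the walk starts with an edge pointing into `v`; for `v ∉ C` no condition is imposed,
as under m-separation any such walk can be replaced by one that prolongs
(`IsOpenWalkTo.exists_cons_of_mSep`). -/
def noiseConnected (G : MixedGraph V) (A B C : Set V) : Set V :=
  {v ∈ G.ancestralClosure (A ∪ B ∪ C) |
    ∃ l, G.IsOpenWalkTo C B (v :: l) ∧ (v ∈ C → ∀ c ∈ l.head?, G.headInto c v)}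

theorem noiseConnected_subset : G.noiseConnected A B C ⊆ G.ancestralClosure (A ∪ B ∪ C) :=
  Set.sep_subset _ _

theorem subset_noiseConnected : B ⊆ G.noiseConnected A B C :=
  fun _ hb => ⟨subset_ancestralClosure (Or.inl (Or.inr hb)), [], .singleton hb, by simp⟩

theorem mem_noiseConnected_of_isOpenWalkTo (hv : v ∈ G.ancestralClosure (A ∪ B ∪ C))
    (h : G.IsOpenWalkTo C B (v :: u :: l)) (huv : v ∈ C → G.headInto u v) :
    v ∈ G.noiseConnected A B C :=
  ⟨hv, u :: l, h, by simpa using huv⟩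

theorem disjoint_noiseConnected (hG : G.IsSimpleAcyclic) (hsep : G.mSep A B C) :
    Disjoint A (G.noiseConnected A B C) :=
  Set.disjoint_left.2 fun _ ha ⟨_, _, h, _⟩ => h.notMem_of_mSep hG hsep ha

theorem exists_isOpenWalkTo_of_headInto (hG : G.IsSimpleAcyclic) (hsep : G.mSep A B C)
    (hv : v ∈ G.noiseConnected A B C) (huv : G.headInto u v) :
    ∃ l, G.IsOpenWalkTo C B (u :: v :: l) := by
  obtain ⟨hv_an, l, hl, hl_head⟩ := hv
  have hadj : G.adj u v := huv.imp_right Or.inr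
  by_cases hvC : v ∈ C
  · exact ⟨l, hl.cons hadj fun c hc => ⟨fun _ => subset_ancestralClosure hvC,
      fun h => absurd ⟨huv, hl_head hvC c hc⟩ h⟩⟩
  · exact hl.exists_cons_of_mSep hG hsep hv_an hvC hadj

theorem mem_noiseConnected_of_arc (hG : G.IsSimpleAcyclic) (hsep : G.mSep A B C)
    (hu : u ∈ G.ancestralClosure (A ∪ B ∪ C)) (hv : v ∈ G.noiseConnected A B C)
    (huv : G.arc u v) : u ∈ G.noiseConnected A B C := by
  obtain ⟨l, hl⟩ := exists_isOpenWalkTo_of_headInto hG hsep hv (Or.inr huv)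
  exact mem_noiseConnected_of_isOpenWalkTo hu hl fun _ => Or.inr (hG.arc_symm u v huv)

theorem mem_noiseConnected_union_of_arrow (hG : G.IsSimpleAcyclic) (hsep : G.mSep A B C)
    (hv : v ∈ G.noiseConnected A B C) (huv : G.arrow u v) : u ∈ G.noiseConnected A B C ∪ C := by
  refine or_iff_not_imp_right.2 fun huC => ?_
  obtain ⟨l, hl⟩ := exists_isOpenWalkTo_of_headInto hG hsep hv (Or.inl huv)
  exact mem_noiseConnected_of_isOpenWalkTo
    (mem_ancestralClosure_of_arrow huv (noiseConnected_subset hv)) hl fun h => absurd h huC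

theorem mem_diff_noiseConnected_union_of_arrow (hG : G.IsSimpleAcyclic) (hsep : G.mSep A B C)
    (hv : v ∈ G.ancestralClosure (A ∪ B ∪ C) \ G.noiseConnected A B C) (huv : G.arrow u v) :
    u ∈ (G.ancestralClosure (A ∪ B ∪ C) \ G.noiseConnected A B C) ∪ C := by
  refine or_iff_not_imp_right.2 fun huC => ?_
  refine ⟨mem_ancestralClosure_of_arrow huv hv.1, fun ⟨hu, l, hl, _⟩ => hv.2 ?_⟩
  obtain ⟨l', hl'⟩ := hl.exists_cons_of_mSep hG hsep hu huC (Or.inr (Or.inl huv))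
  exact mem_noiseConnected_of_isOpenWalkTo hv.1 hl' fun _ => Or.inl huv

end MixedGraph

/-! ### Structural equations -/

theorem MixedGraph.IsSimpleAcyclic.condIndep_biSup_of_mSep {V : Type} [Finite V] {Ω : Type*}
    {mΩ : MeasurableSpace Ω} [StandardBorelSpace Ω] {μ : Measure Ω} [IsProbabilityMeasure μ]
    {G : MixedGraph V} (hG : G.IsSimpleAcyclic) {𝓕 𝓔 : V → MeasurableSpace Ω}
    (h𝓕 : ∀ v, 𝓕 v ≤ mΩ) (h𝓔 : ∀ v, 𝓔 v ≤ mΩ)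
    (h_le : ∀ v, 𝓕 v ≤ (⨆ u ∈ {u | G.arrow u v}, 𝓕 u) ⊔ 𝓔 v)
    (h_indep : ∀ S T : Set V, Disjoint S T → (¬ ∃ s ∈ S, ∃ t ∈ T, G.arc s t) →
      Indep (⨆ v ∈ S, 𝓔 v) (⨆ v ∈ T, 𝓔 v) μ)
    {A B C : Set V} (hsep : G.mSep A B C) :
    CondIndep (⨆ v ∈ C, 𝓕 v) (⨆ v ∈ A, 𝓕 v) (⨆ v ∈ B, 𝓕 v) (iSup₂_le fun v _ => h𝓕 v) μ := by
  set W := G.ancestralClosure (A ∪ B ∪ C)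
  set S := G.noiseConnected A B C
  have h_noise : Indep (⨆ v ∈ W \ S, 𝓔 v) (⨆ v ∈ S, 𝓔 v) μ := by
    refine h_indep _ _ Set.disjoint_sdiff_left ?_
    rintro ⟨t, ht, s, hs, hts⟩
    exact ht.2 (mem_noiseConnected_of_arc hG hsep ht.1 hs hts)
  have hA : A ⊆ W \ S := Set.subset_sdiff.2
    ⟨fun a ha => subset_ancestralClosure (Or.inl (Or.inl ha)), disjoint_noiseConnected hG hsep⟩
  have hC : C ⊆ W \ S ∪ S := by
    rw [Set.sdiff_union_of_subset noiseConnected_subset]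
    exact fun c hc => subset_ancestralClosure (Or.inr hc)
  exact condIndep_biSup_of_subset_union hG.wellFounded_arrow h𝓕 h𝓔 h_le
    (fun u v => mem_diff_noiseConnected_union_of_arrow hG hsep)
    (fun u v => mem_noiseConnected_union_of_arrow hG hsep) h_noise C.toFinite hC hA
    subset_noiseConnected

section StructuralEquations

variable {V Ω : Type} {𝓧 E : V → Type} [∀ v, MeasurableSpace (𝓧 v)]
  [∀ v, MeasurableSpace (E v)] {G : MixedGraph V} {X : ∀ v, Ω → 𝓧 v} {ε : ∀ v, Ω → E v}

theorem comap_restrictVars (X : ∀ v, Ω → 𝓧 v) (S : Set V) :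
    MeasurableSpace.comap (restrictVars X S) MeasurableSpace.pi =
      ⨆ v ∈ S, MeasurableSpace.comap (X v) inferInstance := by
  rw [iSup_subtype', MeasurableSpace.pi, MeasurableSpace.comap_iSup]
  simp only [MeasurableSpace.comap_comp]
  rfl

theorem comap_le_of_structural_equation {v : V}
    {φ : (∀ k : {k : V // G.arrow k v}, 𝓧 k) → E v → 𝓧 v}
    (hφ : Measurable fun q : (∀ k : {k : V // G.arrow k v}, 𝓧 k) × E v => φ q.1 q.2)
    (hXφ : ∀ ω, X v ω = φ (fun k => X k ω) (ε v ω)) :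
    MeasurableSpace.comap (X v) inferInstance ≤
      (⨆ u ∈ {u | G.arrow u v}, MeasurableSpace.comap (X u) inferInstance) ⊔
        MeasurableSpace.comap (ε v) inferInstance := by
  have h_comp : X v = (fun q : (∀ k : {k : V // G.arrow k v}, 𝓧 k) × E v => φ q.1 q.2) ∘
      fun ω => (restrictVars X {u | G.arrow u v} ω, ε v ω) := funext hXφ
  rw [← comap_restrictVars, h_comp, ← MeasurableSpace.comap_comp]
  refine (MeasurableSpace.comap_mono hφ.comap_le).trans ?_
  exact (MeasurableSpace.comap_prodMk _ _).le

end StructuralEquations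

theorem statement_13_general {V : Type} [Finite V]
    {Ω : Type} [MeasurableSpace Ω] [StandardBorelSpace Ω] [Nonempty Ω]
    (μ : Measure Ω) [IsProbabilityMeasure μ]
    {𝓧 : V → Type} [∀ v, MeasurableSpace (𝓧 v)] {E : V → Type} [∀ v, MeasurableSpace (E v)]
    {G : MixedGraph V} (hG : G.IsSimpleAcyclic)
    {X : ∀ v, Ω → 𝓧 v} (hX : ∀ v, Measurable (X v)) {ε : ∀ v, Ω → E v}
    (hε : ∀ v, Measurable (ε v))
    {φ : ∀ i, (∀ k : {k : V // G.arrow k i}, 𝓧 k) → E i → 𝓧 i}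
    (hφ : ∀ i, Measurable fun q : (∀ k : {k : V // G.arrow k i}, 𝓧 k) × E i => φ i q.1 q.2)
    (hXφ : ∀ i ω, X i ω = φ i (fun k => X k ω) (ε i ω))
    (h_indep : ∀ S T : Set V, Disjoint S T → (¬ ∃ s ∈ S, ∃ t ∈ T, G.arc s t) →
      IndepFun (restrictVars ε S) (restrictVars ε T) μ) :
    Markovian μ X hX G := by
  intro A B C _ _ _ hsep
  rw [CI, condIndepFun_iff_condIndep]
  simp only [comap_restrictVars]
  refine hG.condIndep_biSup_of_mSep (fun v => (hX v).comap_le) (fun v => (hε v).comap_le)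
    (fun v => comap_le_of_structural_equation (hφ v) (hXφ v)) (fun S T hST harc => ?_) hsep
  simpa only [IndepFun_iff_Indep, comap_restrictVars] using h_indep S T hST harc

/-- Theorem 20 of Sadeghi–Soo: the joint distribution of an SCM is
Markovian to its associated directed ancestral graph. -/
theorem statement_13 {V : Type} [Fintype V] [DecidableEq V]
    {Ω : Type} [MeasurableSpace Ω] [StandardBorelSpace Ω] [Nonempty Ω]
    (μ : Measure Ω) [IsProbabilityMeasure μ]
    {𝓧 : V → Type} [∀ v, MeasurableSpace (𝓧 v)] [∀ v, StandardBorelSpace (𝓧 v)]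
    [∀ v, Nonempty (𝓧 v)]
    {E : V → Type} [∀ v, MeasurableSpace (E v)]
    (G0 : MixedGraph V) (hanc : G0.IsDirectedAncestral)
    (X : ∀ v, Ω → 𝓧 v) (ε : ∀ v, Ω → E v)
    (φ : ∀ i, (∀ k : {k : V // G0.arrow k i}, 𝓧 k) → E i → 𝓧 i)
    (hSCM : IsSCM G0 μ X ε φ) (hX : ∀ v, Measurable (X v)) :
    Markovian μ X hX G0 := by
  obtain ⟨-, hε, hφ, hXφ, h_indep⟩ := hSCM
  exact statement_13_general μ hanc.isSimpleAcyclic hX hε hφ hXφ fun S T hST => (h_indep S T hST).2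
end

section
/- Consider an SCM associated with a directed ancestral graph containing the arrow j → i, and write X_i = φ_i(X_{pa(i)∖{j}}, X_j, ε_i), where ε_i is independent of (X_{an(i,j)}, X_j). Suppose an(i,j) ≠ ∅ and all state spaces are standard Borel. Then X_i is conditionally independent of X_j given X_{an(i,j)} if and only if for almost all x_{an(i,j)} (w.r.t. the law of X_{an(i,j)}), the conditional law of X_i given X_{an(i,j)} = x_{an(i,j)} equals the law of φ_i(x_{pa(i)∖{j}}, x_j, ε_i) for almost all x_j in the support of the conditional distribution of X_j given X_{an(i,j)} = x_{an(i,j)}. -/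
open MeasureTheory ProbabilityTheory

/-!
Write `X_i = φ (Z, Y) ε` with `Z = X_C`, `Y = X_j` and the noise `ε` independent of `(Z, Y)`.
Then the law of `φ (z, y) ε` is a version of the conditional law of `X_i` given `(Z, Y)`, whereas
conditional independence of `X_i` and `Y` given `Z` says that this conditional law is almost surely
the conditional law of `X_i` given `Z` alone. The joint law of `(Z, Y)` disintegrates into the law
of `Z` and the conditional law of `Y` given `Z`, which turns an identity holding almost everywhere
in `(z, y)` into the iterated one. Fubini's theorem for null sets needs the set where two kernels
coincide to be measurable, which holds because the target σ-algebra is countably generated.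
-/

section KernelEquality

theorem exists_countable_isPiSystem_generateFrom_eq (β : Type*) [m : MeasurableSpace β]
    [MeasurableSpace.CountablyGenerated β] :
    ∃ S : Set (Set β), S.Countable ∧ IsPiSystem S ∧ Set.univ ∈ S ∧
      MeasurableSpace.generateFrom S = m := by
  have hS := isSetAlgebra_generateSetAlgebra (𝒜 := MeasurableSpace.countableGeneratingSet β)
  refine ⟨_, countable_generateSetAlgebra MeasurableSpace.countable_countableGeneratingSet,
    fun s hs t ht _ ↦ hS.inter_mem hs ht, hS.univ_mem, ?_⟩
  rw [generateFrom_generateSetAlgebra_eq, MeasurableSpace.generateFrom_countableGeneratingSet]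

variable {α β : Type*} [MeasurableSpace α] [MeasurableSpace β]

theorem measurableSet_setOf_kernel_eq [MeasurableSpace.CountablyGenerated β]
    (κ η : Kernel α β) [IsFiniteKernel κ] : MeasurableSet {a | κ a = η a} := by
  obtain ⟨S, hS_countable, hS_pi, hS_univ, hS_gen⟩ := exists_countable_isPiSystem_generateFrom_eq β
  have h_eq : {a | κ a = η a} = ⋂ s ∈ S, {a | κ a s = η a s} := by
    ext a
    simp only [Set.mem_ofPred_eq, Set.mem_iInter]
    exact ⟨fun h s _ ↦ by rw [h], fun h ↦
      ext_of_generate_finite S hS_gen.symm hS_pi h (h Set.univ hS_univ)⟩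
  rw [h_eq]
  refine MeasurableSet.biInter hS_countable fun s hs ↦ ?_
  have hs_meas : MeasurableSet s := hS_gen ▸ MeasurableSpace.measurableSet_generateFrom hs
  exact measurableSet_eq_fun (κ.measurable_coe hs_meas) (η.measurable_coe hs_meas)

end KernelEquality

section CondDistrib

variable {Ω α β γ : Type*} [MeasurableSpace Ω] [MeasurableSpace α] [MeasurableSpace β]
  [MeasurableSpace γ] {μ : Measure Ω}

theorem hasCondDistrib_const_of_indepFun [IsFiniteMeasure μ] {X : Ω → α} {Y : Ω → β}
    (hX : AEMeasurable X μ) (hY : AEMeasurable Y μ) (h : IndepFun X Y μ) :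
    HasCondDistrib Y X (Kernel.const α (μ.map Y)) μ where
  aemeasurable := hX.prodMk hY
  map_eq := by rw [h.map_prod_eq_prod_map_map hX hY, Measure.compProd_const]

theorem hasCondDistrib_self_prodMk [SFinite μ] {X : Ω → α} {Y : Ω → β} {κ : Kernel α β}
    [IsSFiniteKernel κ] (h : HasCondDistrib Y X κ μ) :
    HasCondDistrib (fun ω ↦ (X ω, Y ω)) X (Kernel.id ×ₖ κ) μ where
  aemeasurable := h.aemeasurable_fst.prodMk h.aemeasurable
  map_eq := by
    have hf : Measurable fun p : α × β ↦ (p.1, p) := by fun_prop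
    calc μ.map (fun ω ↦ (X ω, X ω, Y ω))
        = (μ.map fun ω ↦ (X ω, Y ω)).map fun p ↦ (p.1, p) := by
          rw [AEMeasurable.map_map_of_aemeasurable hf.aemeasurable h.aemeasurable]; rfl
      _ = (μ.map X ⊗ₘ κ).map fun p ↦ (p.1, p) := by rw [h.map_eq]
      _ = μ.map X ⊗ₘ (Kernel.id ×ₖ κ) := by
          ext s hs
          rw [Measure.map_apply hf hs, Measure.compProd_apply (hf hs), Measure.compProd_apply hs]
          refine lintegral_congr fun a ↦ ?_
          rw [Kernel.id_prod_apply' _ _ (measurable_prodMk_left hs)]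
          rfl

/-- The kernel sending `a` to the law of `f a e`, where the noise `e` has law `ν`. It is the
conditional law of an output produced by the mechanism `f` from an input and independent noise.
When `f` is not jointly measurable it is the zero kernel. -/
noncomputable def mechanismKernel (f : α → β → γ) (ν : Measure β) : Kernel α γ :=
  (Kernel.id ×ₖ Kernel.const α ν).map (Function.uncurry f)

instance (f : α → β → γ) (ν : Measure β) [IsFiniteMeasure ν] :
    IsFiniteKernel (mechanismKernel f ν) :=
  inferInstanceAs (IsFiniteKernel (Kernel.map _ _))

theorem mechanismKernel_apply {f : α → β → γ} (hf : Measurable (Function.uncurry f))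
    (ν : Measure β) [SFinite ν] (a : α) : mechanismKernel f ν a = ν.map (f a) := by
  rw [mechanismKernel, Kernel.map_apply _ hf, Kernel.prod_apply, Kernel.id_apply,
    Kernel.const_apply, Measure.dirac_prod, Measure.map_map hf measurable_prodMk_left]
  rfl

theorem hasCondDistrib_mechanismKernel [IsFiniteMeasure μ] {X : Ω → α} {e : Ω → β}
    (hX : AEMeasurable X μ) (he : AEMeasurable e μ) (h : IndepFun X e μ) {f : α → β → γ}
    (hf : Measurable (Function.uncurry f)) :
    HasCondDistrib (fun ω ↦ f (X ω) (e ω)) X (mechanismKernel f (μ.map e)) μ :=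
  HasCondDistrib.comp_left (hasCondDistrib_self_prodMk (hasCondDistrib_const_of_indepFun hX he h))
    hf

variable [StandardBorelSpace Ω] [StandardBorelSpace β] [Nonempty β] [StandardBorelSpace γ]
  [Nonempty γ] [IsFiniteMeasure μ] {Z : Ω → α} {Y : Ω → β} {W : Ω → γ}

theorem condIndepFun_iff_ae_ae_condDistrib_eq (hZ : Measurable Z) (hY : Measurable Y)
    (hW : Measurable W) {κ : Kernel (α × β) γ} [IsFiniteKernel κ]
    (hκ : HasCondDistrib W (fun ω ↦ (Z ω, Y ω)) κ μ) :
    W ⟂ᵢ[Z, hZ; μ] Y ↔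
      ∀ᵐ z ∂μ.map Z, ∀ᵐ y ∂condDistrib Y Z μ z, condDistrib W Z μ z = κ (z, y) := by
  have hκ_ae := condDistrib_ae_eq_of_measure_eq_compProd _ hW.aemeasurable hκ.map_eq
  calc W ⟂ᵢ[Z, hZ; μ] Y
      ↔ Y ⟂ᵢ[Z, hZ; μ] W := ⟨CondIndepFun.symm, CondIndepFun.symm⟩
    _ ↔ condDistrib W (fun ω ↦ (Z ω, Y ω)) μ =ᵐ[μ.map fun ω ↦ (Z ω, Y ω)]
          (condDistrib W Z μ).prodMkRight β :=
        condIndepFun_iff_condDistrib_prod_ae_eq_prodMkRight hW hY hZ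
    _ ↔ (condDistrib W Z μ).prodMkRight β =ᵐ[μ.map fun ω ↦ (Z ω, Y ω)] κ :=
        ⟨fun h ↦ h.symm.trans hκ_ae, fun h ↦ hκ_ae.trans h.symm⟩
    _ ↔ ∀ᵐ p ∂(μ.map Z ⊗ₘ condDistrib Y Z μ), (condDistrib W Z μ).prodMkRight β p = κ p := by
        rw [compProd_map_condDistrib hY.aemeasurable, Filter.EventuallyEq]
    _ ↔ _ := Measure.ae_compProd_iff (measurableSet_setOf_kernel_eq _ κ)

end CondDistrib

section CombineAt

variable {V : Type} [DecidableEq V] (G : MixedGraph V) {𝓧 : V → Type} (i p : V)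

theorem combineAt_restrict (x : ∀ v, 𝓧 v) :
    combineAt G i p (fun k ↦ x k) (x p) = fun k : {k : V // G.arrow k i} ↦ x k := by
  funext ⟨k, hk⟩
  by_cases h : k = p
  · subst h
    simp [combineAt]
  · simp [combineAt, h]

theorem measurable_combineAt [∀ v, MeasurableSpace (𝓧 v)] :
    Measurable fun q : (∀ k : {k : V // G.arrow k i ∧ k ≠ p}, 𝓧 k) × 𝓧 p ↦
      combineAt G i p q.1 q.2 := by
  refine measurable_pi_lambda _ fun ⟨k, hk⟩ ↦ ?_
  by_cases h : k = p
  · subst h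
    simpa [combineAt] using measurable_snd
  · simp only [combineAt, h, dite_false]
    exact (measurable_pi_apply _).comp measurable_fst

end CombineAt

section SingletonIndependence

variable {V Ω : Type} {𝓧 : V → Type} [∀ v, MeasurableSpace (𝓧 v)]

theorem comap_restrictVars_singleton (X : ∀ v, Ω → 𝓧 v) (v : V) :
    MeasurableSpace.comap (restrictVars X {v}) MeasurableSpace.pi =
      MeasurableSpace.comap (X v) inferInstance := by
  simp only [MeasurableSpace.pi, MeasurableSpace.comap_comp, iSup_unique]
  rfl

theorem ciP_iff_condIndepFun [MeasurableSpace Ω] [StandardBorelSpace Ω] [Nonempty Ω]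
    (μ : Measure Ω) [IsFiniteMeasure μ] (X : ∀ v, Ω → 𝓧 v) (hX : ∀ v, Measurable (X v))
    (i j : V) (C : Set V) :
    ciP μ X hX i j C ↔ X i ⟂ᵢ[restrictVars X C, measurable_restrictVars hX C; μ] X j := by
  rw [ciP, CI, condIndepFun_iff_condIndep, condIndepFun_iff_condIndep,
    comap_restrictVars_singleton, comap_restrictVars_singleton]

end SingletonIndependence

theorem statement_15_general {V : Type} [DecidableEq V]
    {Ω : Type} [MeasurableSpace Ω] [StandardBorelSpace Ω] [Nonempty Ω]
    (μ : Measure Ω) [IsFiniteMeasure μ]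
    {𝓧 : V → Type} [∀ v, MeasurableSpace (𝓧 v)]
    (G : MixedGraph V) (X : ∀ v, Ω → 𝓧 v) (hX : ∀ v, Measurable (X v))
    (i j : V) [StandardBorelSpace (𝓧 i)] [Nonempty (𝓧 i)]
    [StandardBorelSpace (𝓧 j)] [Nonempty (𝓧 j)]
    {E : Type*} [MeasurableSpace E] (ε : Ω → E) (hε : AEMeasurable ε μ)
    (φ : (∀ k : {k : V // G.arrow k i}, 𝓧 k) → E → 𝓧 i) (hφ : Measurable (Function.uncurry φ))
    (hXφ : ∀ ω, X i ω = φ (fun k ↦ X k ω) (ε ω))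
    (C : Set V) (hpa : ∀ k : V, G.arrow k i → k ≠ j → k ∈ C)
    (hindep : IndepFun ε (fun ω ↦ (restrictVars X C ω, X j ω)) μ) :
    ciP μ X hX i j C ↔
      ∀ᵐ xC ∂(μ.map (restrictVars X C)), ∀ᵐ xj ∂(condDistrib (X j) (restrictVars X C) μ xC),
        condDistrib (X i) (restrictVars X C) μ xC =
          (μ.map ε).map (φ (combineAt G i j (fun k ↦ xC ⟨k, hpa k k.2.1 k.2.2⟩) xj)) := by
  let f : (∀ a : C, 𝓧 a) × 𝓧 j → E → 𝓧 i :=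
    fun q ↦ φ (combineAt G i j (fun k ↦ q.1 ⟨k, hpa k k.2.1 k.2.2⟩) q.2)
  have hf : Measurable (Function.uncurry f) := by
    have hrestrict : Measurable fun (xC : ∀ a : C, 𝓧 a) (k : {k : V // G.arrow k i ∧ k ≠ j}) ↦
        xC ⟨k, hpa k k.2.1 k.2.2⟩ := measurable_pi_lambda _ fun _ ↦ measurable_pi_apply _
    have hcombine := (measurable_combineAt G i j).comp (hrestrict.prodMap measurable_id)
    exact hφ.comp (hcombine.prodMap measurable_id)
  have hXf : X i = fun ω ↦ f (restrictVars X C ω, X j ω) (ε ω) := by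
    funext ω
    rw [hXφ, ← combineAt_restrict G i j (X · ω)]
    rfl
  have hC := measurable_restrictVars hX C
  have hκ : HasCondDistrib (X i) (fun ω ↦ (restrictVars X C ω, X j ω))
      (mechanismKernel f (μ.map ε)) μ :=
    hXf ▸ hasCondDistrib_mechanismKernel (hC.prodMk (hX j)).aemeasurable hε hindep.symm hf
  rw [ciP_iff_condIndepFun, condIndepFun_iff_ae_ae_condDistrib_eq hC (hX j) (hX i) hκ]
  simp only [mechanismKernel_apply hf, f]

/-- Proposition 23 of Sadeghi–Soo. -/
theorem statement_15 {V : Type} [Fintype V] [DecidableEq V]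
    {Ω : Type} [MeasurableSpace Ω] [StandardBorelSpace Ω] [Nonempty Ω]
    (μ : Measure Ω) [IsProbabilityMeasure μ]
    {𝓧 : V → Type} [∀ v, MeasurableSpace (𝓧 v)] [∀ v, StandardBorelSpace (𝓧 v)]
    [∀ v, Nonempty (𝓧 v)]
    {E : V → Type} [∀ v, MeasurableSpace (E v)]
    (G0 : MixedGraph V) (hanc : G0.IsDirectedAncestral)
    (X : ∀ v, Ω → 𝓧 v) (ε : ∀ v, Ω → E v)
    (φ : ∀ i, (∀ k : {k : V // G0.arrow k i}, 𝓧 k) → E i → 𝓧 i)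
    (hSCM : IsSCM G0 μ X ε φ) (hX : ∀ v, Measurable (X v))
    (i j : V) (harr : G0.arrow j i)
    (hpa : ∀ k : V, G0.arrow k i → k ≠ j → k ∈ G0.anSet i j)
    (hindep : IndepFun (ε i)
      (fun ω => (restrictVars X (G0.anSet i j) ω, X j ω)) μ)
    (hne : (G0.anSet i j).Nonempty) :
    ciP μ X hX i j (G0.anSet i j) ↔
      ∀ᵐ xA ∂(μ.map (restrictVars X (G0.anSet i j))),
        ∀ᵐ xj ∂(condDistrib (X j) (restrictVars X (G0.anSet i j)) μ xA),
          condDistrib (X i) (restrictVars X (G0.anSet i j)) μ xA =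
            (μ.map (ε i)).map
              (fun e => φ i (combineAt G0 i j (paProj G0 i j hpa xA) xj) e) :=
  statement_15_general μ G0 X hX i j (ε i) (hSCM.2.1 i).aemeasurable (φ i) (hSCM.2.2.1 i)
    (hSCM.2.2.2.1 i) (G0.anSet i j) hpa hindep
end
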